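/- arXiv:1902.03822 — 3 statements merged into one kernel-verified Lean document; each statement's English description precedes it below -/
import Mathlib

section
/- Let B be a type and let σ be any monoid congruence on FreeMonoid (B × Bool) containing the Vagner congruence ν. (i) If x * [ℓ] * [ℓ⁻¹] * y is right invertible modulo σ, where ℓ is a single letter with formal inverse ℓ⁻¹ and x, y are words, then σ relates x * [ℓ] * [ℓ⁻¹] * y to x * y. (ii) Consequently, for every word w that is right invertible modulo σ, σ relates w to its free reduction, i.e., to the word (FreeGroup.mk w).toWord. -/
/-- The formal inverse of a word over `B`: reverse the word and negate the `Bool` component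
of each letter. -/
def wInv {B : Type*} (w : FreeMonoid (B × Bool)) : FreeMonoid (B × Bool) :=
  FreeMonoid.ofList (((FreeMonoid.toList w).map fun p => (p.1, !p.2)).reverse)

/-- The generating relation of the Vagner congruence: `w w⁻¹ w ~ w` and
`w w⁻¹ u u⁻¹ ~ u u⁻¹ w w⁻¹` for all words `u, w`. -/
def vagnerRel (B : Type*) : FreeMonoid (B × Bool) → FreeMonoid (B × Bool) → Prop :=
  fun x y =>
    (∃ w, x = w * wInv w * w ∧ y = w) ∨
    (∃ u w, x = w * wInv w * (u * wInv u) ∧ y = u * wInv u * (w * wInv w))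

/-- The Vagner congruence on `FreeMonoid (B × Bool)`. -/
def vagnerCon (B : Type*) : Con (FreeMonoid (B × Bool)) := conGen (vagnerRel B)

theorem wInv_mul_aux {B : Type*} (x y : FreeMonoid (B × Bool)) :
    wInv (x * y) = wInv y * wInv x := by
  simp [wInv, FreeMonoid.toList_mul, FreeMonoid.ofList_append]

theorem wInv_wInv_aux {B : Type*} (x : FreeMonoid (B × Bool)) : wInv (wInv x) = x := by
  simp [wInv, Function.comp_def]

theorem wInv_of_aux {B : Type*} (l : B × Bool) :
    wInv (FreeMonoid.of l) = FreeMonoid.of (l.1, !l.2) := by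
  simp [wInv, FreeMonoid.toList_of]

theorem part_one_aux {B : Type*}
    (σ : Con (FreeMonoid (B × Bool))) (hσ : vagnerCon B ≤ σ)
    (x y : FreeMonoid (B × Bool)) (l : B × Bool)
    (h : ∃ z, σ (x * FreeMonoid.of l * FreeMonoid.of (l.1, !l.2) * y * z) 1) :
    σ (x * FreeMonoid.of l * FreeMonoid.of (l.1, !l.2) * y) (x * y) := by
  obtain ⟨z, hz⟩ := h
  have e1 : ∀ w : FreeMonoid (B × Bool), ((w * wInv w * w : FreeMonoid (B × Bool)) : σ.Quotient) = w := fun w =>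
    (Con.eq σ).2 (hσ (ConGen.Rel.of _ _ (Or.inl ⟨w, rfl, rfl⟩)))
  have e2 : ∀ u w : FreeMonoid (B × Bool), ((w * wInv w * (u * wInv u) : FreeMonoid (B × Bool)) : σ.Quotient) =
      ((u * wInv u * (w * wInv w) : FreeMonoid (B × Bool)) : σ.Quotient) :=
    fun u w => (Con.eq σ).2 (hσ (ConGen.Rel.of _ _ (Or.inr ⟨u, w, rfl, rfl⟩)))
  have e3 := (Con.eq σ).2 hz
  rw [← wInv_of_aux] at *
  generalize FreeMonoid.of l = t at *
  apply (Con.eq σ).1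
  simp only [Con.coe_mul, Con.coe_one] at *
  have a1 := e1 (x * t)
  have a2 := e2 t (wInv x)
  have a3 := e1 x
  rw [wInv_mul_aux] at a1
  rw [wInv_wInv_aux] at a2
  simp only [Con.coe_mul] at a1
  generalize (x : σ.Quotient) = X at *
  generalize (t : σ.Quotient) = T at *
  generalize ((wInv x : FreeMonoid (B × Bool)) : σ.Quotient) = X' at *
  generalize ((wInv t : FreeMonoid (B × Bool)) : σ.Quotient) = T' at *
  generalize (y : σ.Quotient) = Y at *
  generalize (z : σ.Quotient) = Z at *
  have h1 : X * T * (T' * X') = 1 := by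
    calc X * T * (T' * X') = X * T * (T' * X') * (X * T * T' * Y * Z) := by rw [e3, mul_one]
      _ = (X * T * (T' * X') * (X * T)) * T' * Y * Z := by simp only [mul_assoc]
      _ = 1 := by rw [a1, e3]
  have h2 : X * T * T' = X := by
    calc X * T * T' = (X * X' * X) * T * T' := by rw [a3]
      _ = X * (X' * X * (T * T')) := by simp only [mul_assoc]
      _ = X * T * (T' * X') * X := by rw [a2]; simp only [mul_assoc]
      _ = X := by rw [h1, one_mul]
  rw [h2]

theorem part_two_aux {B : Type*}
    (σ : Con (FreeMonoid (B × Bool))) (hσ : vagnerCon B ≤ σ)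
    (L M : List (B × Bool)) (hr : FreeGroup.Red L M)
    (h : ∃ z, σ (FreeMonoid.ofList L * z) 1) :
    σ (FreeMonoid.ofList L) (FreeMonoid.ofList M) := by
  induction hr with
  | refl => exact σ.refl _
  | tail _ hs ih =>
    refine σ.trans ih ?_
    cases hs with
    | @not L₁ L₂ a b =>
      obtain ⟨z, hz⟩ := h
      have e : FreeMonoid.ofList (L₁ ++ (a, b) :: (a, !b) :: L₂) =
          FreeMonoid.ofList L₁ * FreeMonoid.of (a, b) * FreeMonoid.of (a, !b) *
            FreeMonoid.ofList L₂ := by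
        simp [FreeMonoid.ofList_append, FreeMonoid.ofList_cons, mul_assoc]
      have k := σ.trans (σ.mul (σ.symm ih) (σ.refl z)) hz
      rw [e] at k ⊢
      rw [FreeMonoid.ofList_append]
      exact part_one_aux σ hσ _ _ (a, b) ⟨z, k⟩

/-- For any congruence `σ` containing the Vagner congruence:
(i) if `x ℓ ℓ⁻¹ y` is right invertible modulo `σ` (with `ℓ` a single letter), then `σ`
relates `x ℓ ℓ⁻¹ y` to `x y`; (ii) consequently, every word `w` that is right invertible
modulo `σ` is related by `σ` to its free reduction. -/
theorem rightInvertible_free_reduction {B : Type*} [DecidableEq B]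
    (σ : Con (FreeMonoid (B × Bool))) (hσ : vagnerCon B ≤ σ) :
    (∀ (x y : FreeMonoid (B × Bool)) (ℓ : B × Bool),
      (∃ z, σ (x * FreeMonoid.of ℓ * FreeMonoid.of (ℓ.1, !ℓ.2) * y * z) 1) →
        σ (x * FreeMonoid.of ℓ * FreeMonoid.of (ℓ.1, !ℓ.2) * y) (x * y)) ∧
    (∀ w : FreeMonoid (B × Bool),
      (∃ z, σ (w * z) 1) →
        σ w (FreeMonoid.ofList (FreeGroup.mk (FreeMonoid.toList w)).toWord)) := by
  refine ⟨fun x y l h => part_one_aux σ hσ x y l h, fun w h => ?_⟩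
  rw [FreeGroup.toWord_mk]
  exact part_two_aux σ hσ (FreeMonoid.toList w) _ FreeGroup.reduce.red h
end

section
/- With the construction setup fixed (alphabet B = Fin n ⊕ Unit, idempotent word e, inverse monoid M = Inv⟨B | e·r₁ = 1, r₂ = 1, …, r_m = 1⟩ with defining congruence σ), the inverse monoid M is E-unitary: for every word u ∈ FreeMonoid (B × Bool), if the image of FreeGroup.mk u in the maximal group image K = PresentedGroup {FreeGroup.mk (e*r₁), FreeGroup.mk r₂, …, FreeGroup.mk r_m} (over FreeGroup B) is the identity — equivalently, FreeGroup.mk u lies in the normal closure of the relators — then σ relates u * u to u (the class of u in M is idempotent). -/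
/-- The alphabet `B = Fin n ⊕ Unit`, the generators `a₁, …, a_n` together with the extra
generator `t`. -/
abbrev B (n : ℕ) : Type := Fin n ⊕ Unit

/-- Embedding of words over `Fin n` as words over `B n`. -/
def emb {n : ℕ} : FreeMonoid (Fin n × Bool) →* FreeMonoid (B n × Bool) :=
  FreeMonoid.map (fun p => (Sum.inl p.1, p.2))

/-- The one-letter word `t`. -/
def tW (n : ℕ) : FreeMonoid (B n × Bool) := FreeMonoid.of (Sum.inr (), true)

/-- The one-letter word `t⁻¹`. -/
def tWinv (n : ℕ) : FreeMonoid (B n × Bool) := FreeMonoid.of (Sum.inr (), false)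

/-- The one-letter word `aᵢ`. -/
def aW {n : ℕ} (i : Fin n) : FreeMonoid (B n × Bool) := FreeMonoid.of (Sum.inl i, true)

/-- `u ↦ u u⁻¹`. -/
def idem {β : Type*} (u : FreeMonoid (β × Bool)) : FreeMonoid (β × Bool) := u * wInv u

/-- The idempotent word
`e(a₁, …, a_n, t w₁ t⁻¹, …, t w_k t⁻¹, a₁⁻¹, …, a_n⁻¹)`, where `e(u₁, …, u_l)` denotes
`u₁ u₁⁻¹ ⋯ u_l u_l⁻¹`. -/
def eWord {n k : ℕ} (w : Fin k → FreeMonoid (Fin n × Bool)) : FreeMonoid (B n × Bool) :=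
  ((List.ofFn fun i : Fin n => idem (aW i)) ++
    (List.ofFn fun j : Fin k => idem (tW n * emb (w j) * tWinv n)) ++
    (List.ofFn fun i : Fin n => idem (wInv (aW i)))).prod

/-- The congruence `σ` defining the inverse monoid
`M = Inv⟨B | e·r₁ = 1, r₂ = 1, …, r_m = 1⟩`: it is generated by the Vagner congruence
together with the pairs `(e·r₁, 1)` and `(rᵢ, 1)` for `i ≠ 1`. -/
def invCon {n m k : ℕ} (hm : 0 < m) (r : Fin m → FreeMonoid (Fin n × Bool))
    (w : Fin k → FreeMonoid (Fin n × Bool)) : Con (FreeMonoid (B n × Bool)) :=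
  conGen (fun x y => vagnerRel (B n) x y ∨
    (x = eWord w * emb (r ⟨0, hm⟩) ∧ y = 1) ∨
    (∃ i : Fin m, i ≠ ⟨0, hm⟩ ∧ x = emb (r i) ∧ y = 1))

/-- The set of relators of the maximal group image
`K = Gp⟨B | e·r₁ = 1, r₂ = 1, …, r_m = 1⟩`, as elements of `FreeGroup (B n)`. -/
def relsK {n m k : ℕ} (hm : 0 < m) (r : Fin m → FreeMonoid (Fin n × Bool))
    (w : Fin k → FreeMonoid (Fin n × Bool)) : Set (FreeGroup (B n)) :=
  insert (FreeGroup.mk (FreeMonoid.toList (eWord w * emb (r ⟨0, hm⟩))))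
    {x | ∃ i : Fin m, i ≠ ⟨0, hm⟩ ∧ x = FreeGroup.mk (FreeMonoid.toList (emb (r i)))}

/-- The set of relators of the group `G = Gp⟨Fin n | r₁ = 1, …, r_m = 1⟩`. -/
def relsG {n m : ℕ} (r : Fin m → FreeMonoid (Fin n × Bool)) : Set (FreeGroup (Fin n)) :=
  {x | ∃ i : Fin m, x = FreeGroup.mk (FreeMonoid.toList (r i))}

/-- The canonical evaluation map of words over `Fin n` in the group `G`. -/
def piG {n m : ℕ} (r : Fin m → FreeMonoid (Fin n × Bool)) (u : FreeMonoid (Fin n × Bool)) :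
    PresentedGroup (relsG r) :=
  PresentedGroup.mk (relsG r) (FreeGroup.mk (FreeMonoid.toList u))

/-- The submonoid `T` of `G` generated by the images of `w₁, …, w_k`. -/
def subT {n m k : ℕ} (r : Fin m → FreeMonoid (Fin n × Bool))
    (w : Fin k → FreeMonoid (Fin n × Bool)) : Submonoid (PresentedGroup (relsG r)) :=
  Submonoid.closure (Set.range fun j : Fin k => piG r (w j))

section Helpers

theorem wInv_mul {β : Type*} (x y : FreeMonoid (β × Bool)) :
    wInv (x * y) = wInv y * wInv x := by
  simp [wInv, FreeMonoid.toList_mul, FreeMonoid.ofList_append]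

theorem wInv_of {β : Type*} (p : β × Bool) :
    wInv (FreeMonoid.of p) = FreeMonoid.of (p.1, !p.2) := rfl

theorem lift_idem {β H : Type*} [Group H] (f : β → H) (x : FreeMonoid (β × Bool)) :
    FreeGroup.lift f (FreeGroup.mk (FreeMonoid.toList (idem x))) = 1 := by
  have : FreeGroup.mk (FreeMonoid.toList (idem x))
      = FreeGroup.mk (FreeMonoid.toList x) * (FreeGroup.mk (FreeMonoid.toList x))⁻¹ := by
    rw [FreeGroup.inv_mk, FreeGroup.mul_mk]; rfl
  rw [this, mul_inv_cancel, map_one]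

theorem lift_idem_prod {β H : Type*} [Group H] (f : β → H)
    (l : List (FreeMonoid (β × Bool))) (hl : ∀ x ∈ l, ∃ y, x = idem y) :
    FreeGroup.lift f (FreeGroup.mk (FreeMonoid.toList l.prod)) = 1 := by
  induction l with
  | nil =>
    change FreeGroup.lift f (1 : FreeGroup β) = 1
    exact map_one _
  | cons a l ih =>
    obtain ⟨y, rfl⟩ := hl a (by simp)
    rw [List.prod_cons, FreeMonoid.toList_mul, ← FreeGroup.mul_mk, map_mul, lift_idem, one_mul]
    exact ih fun x hx => hl x (by simp [hx])

theorem eWord_mem {n k : ℕ} (w : Fin k → FreeMonoid (Fin n × Bool)) :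
    ∀ x ∈ ((List.ofFn fun i : Fin n => idem (aW i)) ++
    (List.ofFn fun j : Fin k => idem (tW n * emb (w j) * tWinv n)) ++
    (List.ofFn fun i : Fin n => idem (wInv (aW i)))), ∃ y, x = idem y := by
  intro x hx
  simp only [List.mem_append, List.mem_ofFn] at hx
  rcases hx with (⟨i, rfl⟩ | ⟨i, rfl⟩) | ⟨i, rfl⟩ <;> exact ⟨_, rfl⟩

variable {n m k : ℕ} (hm : 0 < m) (r : Fin m → FreeMonoid (Fin n × Bool))
    (w : Fin k → FreeMonoid (Fin n × Bool))

/-- The quotient map onto `M`. -/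
def LL : FreeMonoid (B n × Bool) →* (invCon hm r w).Quotient := (invCon hm r w).mk'

theorem LL_eq {x y : FreeMonoid (B n × Bool)} (h : invCon hm r w x y) :
    LL hm r w x = LL hm r w y := (Con.eq _).2 h

theorem LL_regular (x : FreeMonoid (B n × Bool)) :
    LL hm r w x * LL hm r w (wInv x) * LL hm r w x = LL hm r w x := by
  rw [← map_mul, ← map_mul]
  exact LL_eq hm r w (ConGen.Rel.of _ _ (Or.inl (Or.inl ⟨x, rfl, rfl⟩)))

theorem LL_comm (x y : FreeMonoid (B n × Bool)) :
    LL hm r w (idem x) * LL hm r w (idem y) = LL hm r w (idem y) * LL hm r w (idem x) := by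
  rw [← map_mul, ← map_mul]
  exact LL_eq hm r w (ConGen.Rel.of _ _ (Or.inl (Or.inr ⟨y, x, rfl, rfl⟩)))

theorem idem_sq (x : FreeMonoid (B n × Bool)) :
    LL hm r w (idem x) * LL hm r w (idem x) = LL hm r w (idem x) := by
  simp only [idem, map_mul]
  rw [← mul_assoc, LL_regular]

theorem idem_prod_one (l : List (FreeMonoid (B n × Bool))) (hl : ∀ x ∈ l, ∃ y, x = idem y)
    (z : FreeMonoid (B n × Bool)) (h : LL hm r w (l.prod * z) = 1) :
    (∀ x ∈ l, LL hm r w x = 1) ∧ LL hm r w z = 1 := by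
  induction l with
  | nil => simpa using h
  | cons a l ih =>
    obtain ⟨y, rfl⟩ := hl a (by simp)
    rw [List.prod_cons, mul_assoc, map_mul] at h
    have h1 : LL hm r w (idem y) = 1 := by
      calc LL hm r w (idem y)
          = LL hm r w (idem y) * (LL hm r w (idem y) * LL hm r w (l.prod * z)) := by
            rw [h, mul_one]
        _ = 1 := by rw [← mul_assoc, idem_sq, h]
    rw [h1, one_mul] at h
    obtain ⟨h2, h3⟩ := ih (fun x hx => hl x (by simp [hx])) h
    exact ⟨by simpa [h1] using h2, h3⟩

theorem rel_zero : LL hm r w (eWord w * emb (r ⟨0, hm⟩)) = 1 :=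
  LL_eq hm r w (ConGen.Rel.of _ _ (Or.inr (Or.inl ⟨rfl, rfl⟩)))

theorem LL_a (i : Fin n) : LL hm r w (FreeMonoid.of (Sum.inl i, true)) *
    LL hm r w (FreeMonoid.of (Sum.inl i, false)) = 1 := by
  rw [← map_mul]
  exact (idem_prod_one hm r w _ (eWord_mem w) _ (rel_zero hm r w)).1 (idem (aW i))
    (by simp)

theorem LL_a' (i : Fin n) : LL hm r w (FreeMonoid.of (Sum.inl i, false)) *
    LL hm r w (FreeMonoid.of (Sum.inl i, true)) = 1 := by
  rw [← map_mul]
  exact (idem_prod_one hm r w _ (eWord_mem w) _ (rel_zero hm r w)).1 (idem (wInv (aW i)))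
    (by simp)

theorem LL_r (i : Fin m) : LL hm r w (emb (r i)) = 1 := by
  by_cases hi : i = ⟨0, hm⟩
  · subst hi
    exact (idem_prod_one hm r w _ (eWord_mem w) _ (rel_zero hm r w)).2
  · exact LL_eq hm r w (ConGen.Rel.of _ _ (Or.inr (Or.inr ⟨i, hi, rfl, rfl⟩)))

/-- The generators `aᵢ` as units of `M`. -/
def aUnit (i : Fin n) : (invCon hm r w).Quotientˣ :=
  ⟨LL hm r w (FreeMonoid.of (Sum.inl i, true)), LL hm r w (FreeMonoid.of (Sum.inl i, false)),
    LL_a hm r w i, LL_a' hm r w i⟩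

theorem lift_aUnit (x : FreeMonoid (Fin n × Bool)) :
    ((FreeGroup.lift (aUnit hm r w) (FreeGroup.mk (FreeMonoid.toList x)) :
      (invCon hm r w).Quotientˣ) : (invCon hm r w).Quotient) = LL hm r w (emb x) := by
  induction x using FreeMonoid.inductionOn' with
  | one =>
    rw [map_one emb, map_one (LL hm r w)]
    change ((FreeGroup.lift (aUnit hm r w) (1 : FreeGroup (Fin n)) :
      (invCon hm r w).Quotientˣ) : (invCon hm r w).Quotient) = 1
    rw [map_one, Units.val_one]
  | of_mul p x ih =>
    rw [FreeMonoid.toList_mul, ← FreeGroup.mul_mk, map_mul, Units.val_mul, ih, map_mul, map_mul]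
    congr 1
    obtain ⟨i, b⟩ := p
    cases b <;> simp [emb, aUnit]

/-- The group `G` maps to the units of `M`. -/
def gUnits : PresentedGroup (relsG r) →* (invCon hm r w).Quotientˣ :=
  PresentedGroup.toGroup (f := aUnit hm r w) (by
    rintro _ ⟨i, rfl⟩
    apply Units.ext
    rw [lift_aUnit, LL_r, Units.val_one])

/-- The two free factors `G` and `ℤ`. -/
def Fam : Bool → Type
  | true => PresentedGroup (relsG r)
  | false => Multiplicative ℤ

instance famGroup : (b : Bool) → Group (Fam r b)
  | true => inferInstanceAs (Group (PresentedGroup (relsG r)))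
  | false => inferInstanceAs (Group (Multiplicative ℤ))

noncomputable instance famDec (b : Bool) : DecidableEq (Fam r b) := Classical.decEq _

/-- Powers of `t` in `M`. -/
def tPow : ℤ → (invCon hm r w).Quotient
  | Int.ofNat a => LL hm r w (FreeMonoid.of (Sum.inr (), true)) ^ a
  | Int.negSucc a => LL hm r w (FreeMonoid.of (Sum.inr (), false)) ^ (a + 1)

/-- The maps from the factors to `M`. -/
def fMap : (b : Bool) → Fam r b → (invCon hm r w).Quotient
  | true => fun g => (gUnits hm r w g : (invCon hm r w).Quotient)
  | false => fun z => tPow hm r w (Multiplicative.toAdd (show Multiplicative ℤ from z))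

theorem fMap_one : (b : Bool) → fMap hm r w b 1 = 1
  | true => by
    change ((gUnits hm r w 1 : (invCon hm r w).Quotientˣ) : (invCon hm r w).Quotient) = 1
    rw [map_one, Units.val_one]
  | false => by
    change LL hm r w (FreeMonoid.of (Sum.inr (), true)) ^ 0 = 1
    exact pow_zero _

/-- Evaluation of normal forms in `M`. -/
def phi (x : Monoid.CoprodI.Word (Fam r)) : (invCon hm r w).Quotient :=
  (x.toList.map fun p => fMap hm r w p.1 p.2).prod

theorem phi_rcons {b : Bool} (p : Monoid.CoprodI.Word.Pair (Fam r) b) :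
    phi hm r w (Monoid.CoprodI.Word.rcons p) = fMap hm r w b p.head * phi hm r w p.tail := by
  unfold Monoid.CoprodI.Word.rcons
  split_ifs with h
  · rw [h, fMap_one, one_mul]
  · simp [phi, Monoid.CoprodI.Word.cons]

/-- Which factor a letter lies in. -/
def side : B n → Bool
  | Sum.inl _ => true
  | Sum.inr _ => false

/-- The element of the factor given by a letter. -/
def fel : (b : B n) → Fam r (side b)
  | Sum.inl i => (PresentedGroup.of i : PresentedGroup (relsG r))
  | Sum.inr _ => (Multiplicative.ofAdd (1 : ℤ) : Multiplicative ℤ)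

/-- Image of the generators in the free product. -/
def psiGen (b : B n) : Monoid.CoprodI (Fam r) := Monoid.CoprodI.of (fel r b)

/-- The element of the factor given by a signed letter. -/
def sel (p : B n × Bool) : Fam r (side p.1) := cond p.2 (fel r p.1) (fel r p.1)⁻¹

theorem fMap_letter (p : B n × Bool) (h : Fam r (side p.1)) :
    ∃ z, LL hm r w (FreeMonoid.of p) * fMap hm r w _ h =
      LL hm r w (idem z) * fMap hm r w _ (sel r p * h) := by
  obtain ⟨b | b, s⟩ := p
  · refine ⟨1, ?_⟩
    have h1 : LL hm r w (idem (1 : FreeMonoid (B n × Bool))) = 1 := map_one _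
    rw [h1, one_mul]
    have h2 : LL hm r w (FreeMonoid.of (Sum.inl b, s)) =
        ((gUnits hm r w (sel r (Sum.inl b, s)) : (invCon hm r w).Quotientˣ) :
          (invCon hm r w).Quotient) := by
      have h3 : gUnits hm r w (PresentedGroup.of b) = aUnit hm r w b :=
        PresentedGroup.toGroup.of _
      cases s
      · change _ = ((gUnits hm r w (PresentedGroup.of b)⁻¹ : (invCon hm r w).Quotientˣ) :
          (invCon hm r w).Quotient)
        rw [map_inv, h3]; rfl
      · change _ = ((gUnits hm r w (PresentedGroup.of b) : (invCon hm r w).Quotientˣ) :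
          (invCon hm r w).Quotient)
        rw [h3]; rfl
    rw [h2]
    change _ = ((gUnits hm r w ((sel r (Sum.inl b, s) : PresentedGroup (relsG r)) * h) :
      (invCon hm r w).Quotientˣ) : (invCon hm r w).Quotient)
    exact ((congrArg Units.val (map_mul (gUnits hm r w) _ _)).trans (Units.val_mul _ _)).symm
  · have key : ∀ (s : Bool) (a : ℤ), ∃ z, LL hm r w (FreeMonoid.of (Sum.inr (), s)) *
        tPow hm r w a = LL hm r w (idem z) * tPow hm r w ((cond s 1 (-1)) + a) := by
      have h1 : LL hm r w (idem (1 : FreeMonoid (B n × Bool))) = 1 := map_one _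
      have h2 : ∀ s, LL hm r w (FreeMonoid.of (Sum.inr (), s)) *
          LL hm r w (FreeMonoid.of (Sum.inr (), !s)) =
          LL hm r w (idem (FreeMonoid.of (Sum.inr (), s))) := by
        intro s; rw [← map_mul]; rfl
      rintro (_ | _) (a | a)
      · rcases a with _ | a
        · refine ⟨1, ?_⟩
          rw [h1, one_mul]
          change _ * LL hm r w _ ^ 0 = LL hm r w _ ^ (0 + 1)
          simp
        · refine ⟨FreeMonoid.of (Sum.inr (), false), ?_⟩
          have : cond false 1 (-1) + Int.ofNat (a + 1) = Int.ofNat a := by simp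
          rw [this, ← h2, mul_assoc]
          change _ * LL hm r w _ ^ (a + 1) = _ * (_ * LL hm r w _ ^ a)
          rw [pow_succ']; rfl
      · refine ⟨1, ?_⟩
        have : cond false 1 (-1) + Int.negSucc a = Int.negSucc (a + 1) := by
          simp only [cond_false]; omega
        rw [h1, one_mul, this]
        exact (pow_succ' _ _).symm
      · refine ⟨1, ?_⟩
        have : cond true 1 (-1) + Int.ofNat a = Int.ofNat (a + 1) := by
          simp [add_comm]
        rw [h1, one_mul, this]
        exact (pow_succ' _ _).symm
      · refine ⟨FreeMonoid.of (Sum.inr (), true), ?_⟩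
        rcases a with _ | a
        · change _ * LL hm r w _ ^ (0 + 1) = _ * LL hm r w _ ^ 0
          rw [← h2]; simp
        · have : cond true 1 (-1) + Int.negSucc (a + 1) = Int.negSucc a := by
            simp only [cond_true]; omega
          rw [this, ← h2, mul_assoc]
          change _ * LL hm r w _ ^ (a + 1 + 1) = _ * (_ * LL hm r w _ ^ (a + 1))
          rw [pow_succ']; rfl
    obtain ⟨z, hz⟩ := key s (Multiplicative.toAdd (show Multiplicative ℤ from h))
    refine ⟨z, hz.trans ?_⟩
    cases s <;> rfl

theorem phi_letter (p : B n × Bool) (x : Monoid.CoprodI.Word (Fam r)) :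
    ∃ z, LL hm r w (FreeMonoid.of p) * phi hm r w x =
      LL hm r w (idem z) * phi hm r w (Monoid.CoprodI.of (sel r p) • x) := by
  rw [Monoid.CoprodI.Word.of_smul_def, phi_rcons]
  have hx : phi hm r w x = fMap hm r w _ (Monoid.CoprodI.Word.equivPair (side p.1) x).head *
      phi hm r w (Monoid.CoprodI.Word.equivPair (side p.1) x).tail := by
    rw [← phi_rcons, ← Monoid.CoprodI.Word.equivPair_symm, Equiv.symm_apply_apply]
  obtain ⟨z, hz⟩ := fMap_letter hm r w p (Monoid.CoprodI.Word.equivPair (side p.1) x).head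
  refine ⟨z, ?_⟩
  rw [hx, ← mul_assoc, hz, mul_assoc]

theorem letter_idem (p : B n × Bool) (v : FreeMonoid (B n × Bool)) :
    LL hm r w (FreeMonoid.of p) * LL hm r w (idem v) =
      LL hm r w (idem (FreeMonoid.of p * v)) * LL hm r w (FreeMonoid.of p) := by
  have hc := LL_comm hm r w v (wInv (FreeMonoid.of p))
  have h1 : idem (wInv (FreeMonoid.of p)) = wInv (FreeMonoid.of p) * FreeMonoid.of p := by
    simp [idem, wInv_of]
  have h2 : idem (FreeMonoid.of p * v) = FreeMonoid.of p * idem v * wInv (FreeMonoid.of p) := by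
    simp [idem, wInv_mul, mul_assoc]
  rw [h1, map_mul] at hc
  rw [h2, map_mul, map_mul, mul_assoc, mul_assoc, hc, ← mul_assoc, ← mul_assoc, LL_regular]

theorem idem_mul_idem (x y : FreeMonoid (B n × Bool)) :
    LL hm r w (idem x) * LL hm r w (idem y) = LL hm r w (idem (idem x * y)) := by
  have hw : wInv (wInv x) = x := by
    simp [wInv, Function.comp_def]
  have h2 : idem (idem x * y) = idem x * (idem y * idem x) := by
    have : wInv (idem x) = idem x := by rw [idem, wInv_mul, hw]
    rw [idem, wInv_mul, this]
    simp [idem, mul_assoc]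
  rw [h2, map_mul, map_mul, LL_comm hm r w y x, ← mul_assoc, idem_sq]

theorem lift_sel (p : B n × Bool) :
    FreeGroup.lift (psiGen r) (FreeGroup.mk [p]) = Monoid.CoprodI.of (sel r p) := by
  obtain ⟨b, s⟩ := p
  cases s <;> simp [sel, psiGen]

theorem main_le (u : FreeMonoid (B n × Bool)) :
    ∃ v, LL hm r w u = LL hm r w (idem v) *
      phi hm r w (FreeGroup.lift (psiGen r) (FreeGroup.mk (FreeMonoid.toList u)) •
        Monoid.CoprodI.Word.empty) := by
  induction u using FreeMonoid.inductionOn' with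
  | one =>
    refine ⟨1, ?_⟩
    have h1 : LL hm r w (idem (1 : FreeMonoid (B n × Bool))) = 1 := map_one _
    have h2 : FreeGroup.lift (psiGen r) (FreeGroup.mk
      (FreeMonoid.toList (1 : FreeMonoid (B n × Bool)))) = 1 := map_one _
    rw [h1, h2, one_smul, map_one]
    simp [phi, Monoid.CoprodI.Word.empty]
  | of_mul p u ih =>
    obtain ⟨v, hv⟩ := ih
    rw [FreeMonoid.toList_mul, ← FreeGroup.mul_mk, map_mul (FreeGroup.lift _), mul_smul, FreeMonoid.toList_of,
      lift_sel, map_mul, hv, ← mul_assoc, letter_idem, mul_assoc]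
    obtain ⟨z, hz⟩ := phi_letter hm r w p
      (FreeGroup.lift (psiGen r) (FreeGroup.mk (FreeMonoid.toList u)) •
        Monoid.CoprodI.Word.empty)
    rw [hz, ← mul_assoc, idem_mul_idem]
    exact ⟨_, rfl⟩

theorem lift_emb (x : FreeMonoid (Fin n × Bool)) :
    FreeGroup.lift (psiGen r) (FreeGroup.mk (FreeMonoid.toList (emb x))) =
      Monoid.CoprodI.of (i := true) (M := Fam r) (piG r x) := by
  induction x using FreeMonoid.inductionOn' with
  | one =>
    exact (map_one (FreeGroup.lift (psiGen r))).trans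
      (map_one (Monoid.CoprodI.of (i := true) (M := Fam r))).symm
  | of_mul p x ih =>
    have h1 : piG r (FreeMonoid.of p * x) = piG r (FreeMonoid.of p) * piG r x := by
      simp only [piG]
      rw [FreeMonoid.toList_mul, ← FreeGroup.mul_mk, map_mul]
    have h2 : Monoid.CoprodI.of (i := true) (M := Fam r) (piG r (FreeMonoid.of p * x)) =
        Monoid.CoprodI.of (i := true) (M := Fam r) (piG r (FreeMonoid.of p)) *
        Monoid.CoprodI.of (i := true) (M := Fam r) (piG r x) := by
      rw [h1]; exact map_mul (Monoid.CoprodI.of (i := true) (M := Fam r)) _ _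
    rw [h2, map_mul, FreeMonoid.toList_mul, ← FreeGroup.mul_mk, map_mul, ih]
    congr 1
    have h3 : FreeMonoid.toList (emb (FreeMonoid.of p)) = [(Sum.inl p.1, p.2)] := rfl
    rw [h3, lift_sel]
    obtain ⟨i, s⟩ := p
    cases s
    · rfl
    · rfl

theorem relsK_sub : relsK hm r w ⊆ (FreeGroup.lift (psiGen r)).ker := by
  have h0 : ∀ i, FreeGroup.lift (psiGen r) (FreeGroup.mk (FreeMonoid.toList (emb (r i)))) = 1 := by
    intro i
    rw [lift_emb]
    have : piG r (r i) = 1 :=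
      (QuotientGroup.eq_one_iff _).2 (Subgroup.subset_normalClosure ⟨i, rfl⟩)
    rw [this]
    exact map_one (Monoid.CoprodI.of (i := true) (M := Fam r))
  rintro x (rfl | ⟨i, -, rfl⟩)
  · rw [SetLike.mem_coe, MonoidHom.mem_ker, FreeMonoid.toList_mul, ← FreeGroup.mul_mk, map_mul,
      h0, mul_one]
    exact lift_idem_prod _ _ (eWord_mem w)
  · exact h0 i

end Helpers

/-- The inverse monoid `M = Inv⟨B | e·r₁ = 1, r₂ = 1, …, r_m = 1⟩` is `E`-unitary: every
word mapping to the identity of the maximal group image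
`K = Gp⟨B | e·r₁ = 1, r₂ = 1, …, r_m = 1⟩` (i.e. whose free-group image lies in the normal
closure of the relators) is an idempotent of `M`. -/
theorem invCon_eUnitary {n m k : ℕ} (hn : 0 < n) (hm : 0 < m) (hk : 0 < k)
    (r : Fin m → FreeMonoid (Fin n × Bool)) (w : Fin k → FreeMonoid (Fin n × Bool)) :
    ∀ u : FreeMonoid (B n × Bool),
      FreeGroup.mk (FreeMonoid.toList u) ∈ Subgroup.normalClosure (relsK hm r w) →
        invCon hm r w (u * u) u := by
  intro u hu
  have hker : FreeGroup.lift (psiGen r) (FreeGroup.mk (FreeMonoid.toList u)) = 1 :=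
    Subgroup.normalClosure_le_normal (N := (FreeGroup.lift (psiGen r)).ker)
      (relsK_sub hm r w) hu
  obtain ⟨v, hv⟩ := main_le hm r w u
  rw [hker, one_smul] at hv
  have h1 : phi hm r w Monoid.CoprodI.Word.empty = 1 := by
    simp [phi, Monoid.CoprodI.Word.empty]
  rw [h1, mul_one] at hv
  refine (Con.eq (invCon hm r w)).1 ?_
  change LL hm r w (u * u) = LL hm r w u
  rw [map_mul, hv]
  exact idem_sq hm r w v
end

section
/- With the construction setup fixed (alphabet B = Fin n ⊕ Unit, idempotent word e, inverse monoid M = Inv⟨B | e·r₁ = 1, r₂ = 1, …, r_m = 1⟩ with defining congruence σ, group G = Gp⟨Fin n | r₁ = 1, …, r_m = 1⟩, and T the submonoid of G generated by the images of w₁, …, w_k): for every word u ∈ FreeMonoid ((Fin n) × Bool), the image πG(u) lies in T if and only if the word t * u * t⁻¹ (regarded as a word over B) is right invertible modulo σ, i.e., there is a word v ∈ FreeMonoid (B × Bool) with σ relating (t * u * t⁻¹) * v to the empty word. -/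
theorem wInv_wInv {β : Type*} (x : FreeMonoid (β × Bool)) : wInv (wInv x) = x := by
  simp [wInv, List.map_reverse, Function.comp_def]

theorem wInv_one {β : Type*} : wInv (1 : FreeMonoid (β × Bool)) = 1 := by
  simp [wInv]

/-! ### Partial bijections -/

/-- Partial bijections under composition (acting on the right). -/
@[reducible] def pMon (X : Type) : Monoid (X ≃. X) where
  mul f g := f.trans g
  one := PEquiv.refl X
  mul_assoc f g h := PEquiv.trans_assoc f g h
  one_mul f := PEquiv.refl_trans f
  mul_one f := PEquiv.trans_refl f

section action
attribute [local instance] pMon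

theorem pmul_def {X : Type} (f g : X ≃. X) : f * g = f.trans g := rfl
theorem pone_def {X : Type} : (1 : X ≃. X) = PEquiv.refl X := rfl

theorem pe_dom {X : Type} (f : X ≃. X) (a : X) :
    (f * f.symm) a = (f a).bind (fun _ => some a) := by
  change (f a).bind f.symm = _
  cases h : f a with
  | none => rfl
  | some b => exact (PEquiv.eq_some_iff f).2 h

theorem pe_inv {X : Type} (f : X ≃. X) : f * f.symm * f = f := by
  ext1 a
  change ((f * f.symm) a).bind f = f a
  rw [pe_dom]
  cases h : f a with
  | none => rfl
  | some b => exact h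

theorem pe_comm {X : Type} (f g : X ≃. X) :
    f * f.symm * (g * g.symm) = g * g.symm * (f * f.symm) := by
  ext1 a
  change ((f * f.symm) a).bind (g * g.symm) = ((g * g.symm) a).bind (f * f.symm)
  rw [pe_dom, pe_dom]
  cases h : f a <;> cases h' : g a <;> simp [pe_dom, h, h']

/-- letter action -/
def letterAct {X β : Type} (act : β → (X ≃. X)) (p : β × Bool) : X ≃. X :=
  if p.2 then act p.1 else (act p.1).symm

/-- word action -/
def wordAct {X β : Type} (act : β → (X ≃. X)) : FreeMonoid (β × Bool) →* (X ≃. X) :=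
  FreeMonoid.lift (letterAct act)

theorem wordAct_wInv {X β : Type} (act : β → (X ≃. X)) (x : FreeMonoid (β × Bool)) :
    wordAct act (wInv x) = (wordAct act x).symm := by
  induction x using FreeMonoid.inductionOn' with
  | one => simp [wInv_one, pone_def]
  | of_mul p x ih =>
    rw [wInv_mul, map_mul, ih, map_mul, wInv_of, pmul_def, pmul_def, PEquiv.symm_trans_rev]
    congr 1
    obtain ⟨b, c⟩ := p
    cases c <;> simp [wordAct, letterAct]

theorem idem_act {X β : Type} (act : β → (X ≃. X)) (x : FreeMonoid (β × Bool))
    (h : ∀ a, (wordAct act x a).isSome) : wordAct act (idem x) = 1 := by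
  rw [idem, map_mul, wordAct_wInv, pmul_def, PEquiv.self_trans_symm, pone_def]
  simp [h]

theorem backward {n m k : ℕ} (hm : 0 < m)
    (r : Fin m → FreeMonoid (Fin n × Bool)) (w : Fin k → FreeMonoid (Fin n × Bool))
    (u : FreeMonoid (Fin n × Bool)) (v : FreeMonoid (B n × Bool))
    (h : invCon hm r w (tW n * emb u * tWinv n * v) 1) : piG r u ∈ subT r w := by
  classical
  let G := PresentedGroup (relsG r)
  have hcF : Countable (FreeGroup (Fin n)) := by
    have : Function.Surjective (FreeGroup.mk : List (Fin n × Bool) → FreeGroup (Fin n)) :=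
      fun x => ⟨x.toWord, FreeGroup.mk_toWord⟩
    exact this.countable
  have hcG : Countable G := (PresentedGroup.mk_surjective (relsG r)).countable
  let T := subT r w
  obtain ⟨τ⟩ : Nonempty ((G × ℕ) ≃ (T × ℕ)) := by
    obtain ⟨e1⟩ := nonempty_denumerable (G × ℕ)
    obtain ⟨e2⟩ := nonempty_denumerable (T × ℕ)
    exact ⟨Denumerable.equiv₂ _ _⟩
  let X := G × ℕ
  let f : X → X := fun x => ((τ x).1.1, (τ x).2)
  have hf : Function.Injective f := by
    intro x y hxy
    have h1 : (f x).1 = (f y).1 := by rw [hxy]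
    have h2 : (f x).2 = (f y).2 := by rw [hxy]
    exact τ.injective (Prod.ext (Subtype.ext h1) h2)
  have hr : ∀ y : X, y.1 ∈ T ↔ ∃ x, f x = y := by
    intro y
    constructor
    · intro hy
      exact ⟨τ.symm (⟨y.1, hy⟩, y.2), by simp [f]⟩
    · rintro ⟨x, rfl⟩
      exact (τ x).1.2
  let tp : X ≃. X :=
    { toFun := fun x => some (f x)
      invFun := fun y => if h : ∃ x, f x = y then some h.choose else none
      inv := by
        intro a b
        by_cases hb : ∃ x, f x = b
        · rw [dif_pos hb]
          simp only [Option.mem_def, Option.some.injEq]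
          constructor
          · intro h; rw [← h]; exact hb.choose_spec
          · intro h; exact hf (hb.choose_spec.trans h.symm)
        · rw [dif_neg hb]
          simp only [Option.mem_def, Option.some.injEq, reduceCtorEq, false_iff]
          exact fun h => hb ⟨a, h⟩ }
  have htp : ∀ x, tp x = some (f x) := fun x => rfl
  have htps : ∀ x y, tp.symm y = some x ↔ f x = y := by
    intro x y
    have := PEquiv.mem_iff_mem tp (a := x) (b := y)
    simpa [htp] using this
  let ra : G → (X ≃. X) := fun g => ((Equiv.mulRight g).prodCongr (Equiv.refl ℕ)).toPEquiv
  have hra : ∀ g x, ra g x = some (x.1 * g, x.2) := fun g x => rfl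
  let act : B n → (X ≃. X) := Sum.elim (fun i => ra (PresentedGroup.of i)) (fun _ => tp)
  have hemb : ∀ u, wordAct act (emb u) = ra (piG r u) := by
    intro u
    induction u using FreeMonoid.inductionOn' with
    | one =>
      ext1 x
      simp [pone_def, hra, piG, ← FreeGroup.one_eq_mk]
    | of_mul p x ih =>
      rw [map_mul, map_mul, ih]
      have h1 : piG r (FreeMonoid.of p * x) = piG r (FreeMonoid.of p) * piG r x := by
        simp only [piG, ← map_mul, FreeGroup.mul_mk, FreeMonoid.toList_mul]
      have h2 : wordAct act (emb (FreeMonoid.of p)) = ra (piG r (FreeMonoid.of p)) := by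
        obtain ⟨i, c⟩ := p
        cases c
        · have h3 : piG r (FreeMonoid.of (i, false)) = (PresentedGroup.of i)⁻¹ := by
            simp only [piG, PresentedGroup.of, ← map_inv, FreeGroup.of]
            rfl
          rw [h3]
          have h4 : wordAct act (emb (FreeMonoid.of (i, false))) = (ra (PresentedGroup.of i)).symm := by
            simp [wordAct, emb, letterAct, act]
          rw [h4]
          rfl
        · have h3 : piG r (FreeMonoid.of (i, true)) = PresentedGroup.of i := rfl
          rw [h3]
          simp [wordAct, emb, letterAct, act]
      rw [h1, h2]
      ext1 y
      rw [pmul_def]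
      change (ra _ y).bind (ra _) = _
      simp [hra, mul_assoc]
  have ht : wordAct act (tW n) = tp := by simp [wordAct, tW, letterAct, act]
  have ht' : wordAct act (tWinv n) = tp.symm := by simp [wordAct, tWinv, letterAct, act]
  have htut : ∀ u x, wordAct act (tW n * emb u * tWinv n) x
      = tp.symm ((f x).1 * piG r u, (f x).2) := by
    intro u x
    rw [map_mul, map_mul, ht, ht', hemb]
    change ((tp x).bind (ra _)).bind tp.symm = _
    simp [htp, hra]
  have he : wordAct act (eWord w) = 1 := by
    rw [eWord, map_list_prod]
    apply List.prod_eq_one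
    intro y hy
    simp only [List.mem_map, List.mem_append, List.mem_ofFn] at hy
    obtain ⟨z, hz, rfl⟩ := hy
    rcases hz with (⟨i, rfl⟩ | ⟨j, rfl⟩) | ⟨i, rfl⟩
    · apply idem_act
      intro a
      simp [wordAct, aW, letterAct, act, hra]
    · apply idem_act
      intro a
      rw [htut]
      obtain ⟨x, hx⟩ := (hr ((f a).1 * piG r (w j), (f a).2)).1
        (T.mul_mem ((hr _).2 ⟨a, rfl⟩) (Submonoid.subset_closure ⟨j, rfl⟩))
      rw [(htps _ _).2 hx]; rfl
    · apply idem_act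
      intro a
      rw [wordAct_wInv]
      have : wordAct act (aW i) = ra (PresentedGroup.of i) := by
        simp [wordAct, aW, letterAct, act]
      rw [this]
      rfl
  have hrel : ∀ i, wordAct act (emb (r i)) = 1 := by
    intro i
    have : piG r (r i) = 1 := PresentedGroup.one_of_mem ⟨i, rfl⟩
    rw [hemb, this]
    ext1 x
    simp [hra, pone_def]
  have hle : invCon hm r w ≤ Con.ker (wordAct act) := by
    apply Con.conGen_le.2
    rintro x y ((⟨w, rfl, rfl⟩ | ⟨u, w, rfl, rfl⟩) | ⟨rfl, rfl⟩ | ⟨i, -, rfl, rfl⟩)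
    · rw [Con.ker_rel, map_mul, map_mul, wordAct_wInv, pe_inv]
    · simp only [Con.ker_rel, map_mul, wordAct_wInv]
      exact pe_comm _ _
    · rw [Con.ker_rel, map_mul, he, hrel, map_one, one_mul]
    · rw [Con.ker_rel, hrel, map_one]
  have h1 := hle h
  rw [Con.ker_rel, map_mul, map_one] at h1
  let x : X := τ.symm (1, 0)
  have hx : f x = (1, 0) := by simp [f, x]
  have h2 : ((wordAct act (tW n * emb u * tWinv n)) x).bind (wordAct act v) = some x :=
    congrArg (fun p : X ≃. X => p x) h1
  rw [htut, hx] at h2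
  cases h3 : tp.symm (((1, 0) : X).1 * piG r u, ((1, 0) : X).2) with
  | none => rw [h3] at h2; simp at h2
  | some z =>
    have := (hr _).2 ⟨z, (htps _ _).1 h3⟩
    simpa using this

end action

/-! ### Forward direction -/

theorem mem_eq_one_of_prod {M : Type*} [Monoid M] (l : List M) (s : M)
    (hid : ∀ x ∈ l, x * x = x) (hc : ∀ x ∈ l, ∀ y ∈ l, x * y = y * x) (h : l.prod * s = 1) :
    ∀ x ∈ l, x = 1 := by
  have key : ∀ l' : List M, (∀ y ∈ l', y ∈ l) → ∀ x ∈ l', x * l'.prod = l'.prod := by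
    intro l'
    induction l' with
    | nil => simp
    | cons a l' ih =>
      intro hs x hx
      rw [List.prod_cons]
      rcases List.mem_cons.1 hx with rfl | hx'
      · rw [← mul_assoc, hid _ (hs _ hx)]
      · rw [← mul_assoc, hc x (hs _ hx) a (hs _ (by simp)), mul_assoc,
          ih (fun y hy => hs y (by simp [hy])) x hx']
  intro x hx
  calc x = x * (l.prod * s) := by rw [h, mul_one]
    _ = 1 := by rw [← mul_assoc, key l (fun _ h => h) x hx, h]

theorem forward {n m k : ℕ} (hm : 0 < m) (hk : 0 < k)
    (r : Fin m → FreeMonoid (Fin n × Bool)) (w : Fin k → FreeMonoid (Fin n × Bool))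
    (u : FreeMonoid (Fin n × Bool)) (hu : piG r u ∈ subT r w) :
    ∃ v : FreeMonoid (B n × Bool), invCon hm r w (tW n * emb u * tWinv n * v) 1 := by
  let c := invCon hm r w
  let P : FreeMonoid (B n × Bool) →* c.Quotient := c.mk'
  have hP : ∀ x y, c x y ↔ P x = P y := fun x y => (Con.eq c).symm
  have gen : ∀ {x y}, (vagnerRel (B n) x y ∨
    (x = eWord w * emb (r ⟨0, hm⟩) ∧ y = 1) ∨
    (∃ i : Fin m, i ≠ ⟨0, hm⟩ ∧ x = emb (r i) ∧ y = 1)) → P x = P y :=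
    fun {x y} h => (hP x y).1 (ConGen.Rel.of _ _ h)
  have hinv : ∀ x, P x * P (wInv x) * P x = P x := by
    intro x
    rw [← map_mul, ← map_mul]
    exact gen (Or.inl (Or.inl ⟨x, rfl, rfl⟩))
  have hcomm : ∀ x y, P (idem x) * P (idem y) = P (idem y) * P (idem x) := by
    intro x y
    rw [← map_mul, ← map_mul]
    exact gen (Or.inl (Or.inr ⟨y, x, rfl, rfl⟩))
  have hid : ∀ x, P (idem x) * P (idem x) = P (idem x) := by
    intro x
    simp only [idem, map_mul]
    rw [← mul_assoc, hinv]
  let L : List (FreeMonoid (B n × Bool)) := ((List.ofFn fun i : Fin n => idem (aW i)) ++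
    (List.ofFn fun j : Fin k => idem (tW n * emb (w j) * tWinv n)) ++
    (List.ofFn fun i : Fin n => idem (wInv (aW i))))
  have he : eWord w = L.prod := rfl
  have hL : ∀ z ∈ L, ∃ x, z = idem x := by
    intro z hz
    simp only [L, List.mem_append, List.mem_ofFn] at hz
    rcases hz with (⟨i, rfl⟩ | ⟨j, rfl⟩) | ⟨i, rfl⟩ <;> exact ⟨_, rfl⟩
  have her : (L.map P).prod * P (emb (r ⟨0, hm⟩)) = 1 := by
    rw [← map_list_prod, ← he, ← map_mul, ← map_one P]
    exact gen (Or.inr (Or.inl ⟨rfl, rfl⟩))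
  have hone : ∀ y ∈ L.map P, y = 1 := by
    apply mem_eq_one_of_prod _ _ _ _ her
    · intro y hy
      obtain ⟨z, hz, rfl⟩ := List.mem_map.1 hy
      obtain ⟨x, rfl⟩ := hL z hz
      exact hid x
    · intro y hy y' hy'
      obtain ⟨z, hz, rfl⟩ := List.mem_map.1 hy
      obtain ⟨x, rfl⟩ := hL z hz
      obtain ⟨z', hz', rfl⟩ := List.mem_map.1 hy'
      obtain ⟨x', rfl⟩ := hL z' hz'
      exact hcomm x x'
  have hr : ∀ i, P (emb (r i)) = 1 := by
    intro i
    by_cases hi : i = ⟨0, hm⟩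
    · rw [List.prod_eq_one hone, one_mul] at her
      rw [hi, her]
    · rw [← map_one P]
      exact gen (Or.inr (Or.inr ⟨i, hi, rfl, rfl⟩))
  have ha1 : ∀ i, P (aW i) * P (wInv (aW i)) = 1 := by
    intro i
    rw [← map_mul]
    exact hone _ (List.mem_map_of_mem (by simp [L, idem]))
  have ha2 : ∀ i, P (wInv (aW i)) * P (aW i) = 1 := by
    intro i
    have : P (idem (wInv (aW i))) = 1 := hone _ (List.mem_map_of_mem (by simp [L]))
    rwa [idem, wInv_wInv, map_mul] at this
  have htw : ∀ j, P (idem (tW n * emb (w j) * tWinv n)) = 1 := fun j =>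
    hone _ (List.mem_map_of_mem (by simp [L]))
  let A : Fin n → c.Quotientˣ := fun i => ⟨P (aW i), P (wInv (aW i)), ha1 i, ha2 i⟩
  have hlift : ∀ x : FreeMonoid (Fin n × Bool),
      ((FreeGroup.lift A (FreeGroup.mk (FreeMonoid.toList x)) : c.Quotientˣ) : c.Quotient)
        = P (emb x) := by
    intro x
    induction x using FreeMonoid.inductionOn' with
    | one => simp [← FreeGroup.one_eq_mk]
    | of_mul p x ih =>
      rw [FreeMonoid.toList_mul, ← FreeGroup.mul_mk, map_mul, Units.val_mul, ih, map_mul, map_mul]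
      congr 1
      obtain ⟨i, b⟩ := p
      cases b
      · simp [emb, A, aW, wInv_of]
      · simp [emb, A, aW]
  have hrels : ∀ x ∈ relsG r, FreeGroup.lift A x = 1 := by
    rintro x ⟨i, rfl⟩
    apply Units.ext
    rw [hlift, hr]; rfl
  let Φ : PresentedGroup (relsG r) →* c.Quotientˣ := PresentedGroup.toGroup hrels
  have hΦ : ∀ x, (Φ (piG r x) : c.Quotient) = P (emb x) := fun x => hlift x
  have htI : wInv (tW n) = tWinv n := wInv_of _
  have htI' : wInv (tWinv n) = tW n := wInv_of _
  have httt : P (tW n) * P (tWinv n) * P (tW n) = P (tW n) := by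
    have := hinv (tW n); rwa [htI] at this
  have hwI : ∀ x, P (wInv (emb x)) = ((Φ (piG r x))⁻¹ : c.Quotientˣ) := by
    intro x
    have := hinv (emb x)
    rw [← hΦ] at this
    generalize P (wInv (emb x)) = y at *
    generalize Φ (piG r x) = W at *
    have h2 : (W : c.Quotient) * y = 1 := by
      have h3 := congrArg (fun z => z * ((W⁻¹ : c.Quotientˣ) : c.Quotient)) this
      simpa [mul_assoc] using h3
    calc y = ((W⁻¹ : c.Quotientˣ) : c.Quotient) * (W * y) := by simp
      _ = _ := by rw [h2, mul_one]
  have htw' : ∀ j, P (tW n) * Φ (piG r (w j)) * P (tWinv n) *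
      (P (tW n) * ((Φ (piG r (w j)))⁻¹ : c.Quotientˣ) * P (tWinv n)) = 1 := by
    intro j
    have := htw j
    rw [idem, wInv_mul, wInv_mul, htI, htI'] at this
    simp only [map_mul, hwI, ← hΦ] at this
    simpa only [mul_assoc] using this
  have htt : P (tW n) * P (tWinv n) = 1 := by
    have h1 := htw' ⟨0, hk⟩
    calc P (tW n) * P (tWinv n) = P (tW n) * P (tWinv n) * 1 := by rw [mul_one]
      _ = 1 := by
        rw [← h1]
        simp only [← mul_assoc]
        rw [httt]
  have main : ∀ g ∈ subT r w, (∃ v, P (tW n) * Φ g * P (tWinv n) * v = 1) ∧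
      P (tW n) * Φ g * P (tWinv n) * P (tW n) = P (tW n) * Φ g := by
    intro g hg
    induction hg using Submonoid.closure_induction with
    | mem x hx =>
      obtain ⟨j, rfl⟩ := hx
      refine ⟨⟨_, htw' j⟩, ?_⟩
      have hc := hcomm (tWinv n) (emb (w j) * tWinv n)
      simp only [idem, wInv_mul, htI', map_mul, hwI, ← hΦ] at hc
      have h1 := htw' j
      dsimp only
      generalize Φ (piG r (w j)) = W at *
      generalize P (tW n) = t at *
      generalize P (tWinv n) = t' at *
      have hg : t * (W * t' * (t * ↑W⁻¹)) = t := by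
        calc t * (W * t' * (t * ↑W⁻¹)) = t * (t' * t * (W * t' * (t * ↑W⁻¹))) := by
              rw [← mul_assoc t (t' * t), ← mul_assoc t t' t, httt]
          _ = (t * W * t' * (t * ↑W⁻¹ * t')) * t := by rw [hc]; simp only [mul_assoc]
          _ = t := by rw [h1, one_mul]
      calc t * W * t' * t = t * (W * t' * (t * ↑W⁻¹)) * W := by
            simp [mul_assoc]
        _ = t * W := by rw [hg]
    | one => simp [htt]
    | mul x y hx hy ihx ihy =>
      obtain ⟨⟨vx, hvx⟩, hx2⟩ := ihx
      obtain ⟨⟨vy, hvy⟩, hy2⟩ := ihy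
      rw [map_mul, Units.val_mul]
      generalize P (tW n) = t at *
      generalize P (tWinv n) = t' at *
      have e1 : t * (Φ x * Φ y) = t * Φ x * t' * (t * Φ y) := by
        rw [← mul_assoc, ← mul_assoc, hx2]
      refine ⟨⟨vy * vx, ?_⟩, ?_⟩
      · rw [e1]
        calc t * Φ x * t' * (t * Φ y) * t' * (vy * vx)
            = t * Φ x * t' * (t * Φ y * t' * vy) * vx := by simp only [mul_assoc]
          _ = 1 := by rw [hvy, mul_one, hvx]
      · rw [e1]
        calc t * Φ x * t' * (t * Φ y) * t' * t
            = t * Φ x * t' * (t * Φ y * t' * t) := by simp only [mul_assoc]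
          _ = _ := by rw [hy2]
  obtain ⟨⟨v, hv⟩, -⟩ := main _ hu
  obtain ⟨v, rfl⟩ := Con.mk'_surjective v
  refine ⟨v, (hP _ _).2 ?_⟩
  rw [hΦ] at hv
  simpa only [map_mul, map_one] using hv


/-- Key claim: for every word `u` over `Fin n`, the image `πG(u)` lies in
`T = ⟨πG w₁, …, πG w_k⟩ ≤ G` if and only if the word `t u t⁻¹` is right invertible in the
inverse monoid `M = Inv⟨B | e·r₁ = 1, r₂ = 1, …, r_m = 1⟩`, i.e. right invertible modulo
its defining congruence `σ`. -/
theorem mem_T_iff_rightInvertible {n m k : ℕ} (hn : 0 < n) (hm : 0 < m) (hk : 0 < k)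
    (r : Fin m → FreeMonoid (Fin n × Bool)) (w : Fin k → FreeMonoid (Fin n × Bool)) :
    ∀ u : FreeMonoid (Fin n × Bool),
      piG r u ∈ subT r w ↔
        ∃ v : FreeMonoid (B n × Bool), invCon hm r w (tW n * emb u * tWinv n * v) 1 := by
  intro u
  exact ⟨forward hm hk r w u, fun ⟨v, h⟩ => backward hm r w u v h⟩
end
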